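/- For every function ξ : Ω → ℝ̄ and every situation s, Ē(ξ|s) = inf{ S(s) : S a bounded-below supermartingale with limsup_{n→∞} S(ω^n) ≥ ξ(ω) for all ω ∈ Γ(s) }; that is, replacing liminf by limsup in the definition of the conditional upper expectation does not change its value. -/

import Mathlib

open Filter Topology

namespace GTP

noncomputable section

/-- An *outer probability content* on a type `Y`: a functional on all
`EReal`-valued functions that is monotone, positively homogeneous,
subadditive, and maps real constants to themselves. -/
def IsOPC {Y : Type*} (E : (Y → EReal) → EReal) : Prop :=
  (∀ f g : Y → EReal, (∀ y, f y ≤ g y) → E f ≤ E g) ∧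
  (∀ (c : ℝ), 0 < c → ∀ f : Y → EReal,
    E (fun y => (c : EReal) * f y) = (c : EReal) * E f) ∧
  (∀ f g : Y → EReal, E (fun y => f y + g y) ≤ E f + E g) ∧
  (∀ c : ℝ, E (fun _ => (c : EReal)) = (c : EReal))

/-- The sum `Σ_{k=0}^∞ f k` of a series of extended reals,
as the supremum of its partial sums (the right notion for nonnegative terms). -/
def eseries (f : ℕ → EReal) : EReal := ⨆ n, ∑ k ∈ Finset.range n, f k

/-- A *superexpectation*: an outer probability content that is moreover
countably subadditive on nonnegative functions. -/
def IsSuperexpectation {Y : Type*} (E : (Y → EReal) → EReal) : Prop :=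
  IsOPC E ∧
  ∀ f : ℕ → Y → EReal, (∀ k y, 0 ≤ f k y) →
    E (fun y => eseries fun k => f k y) ≤ eseries fun k => E (f k)

variable {X : Type*}

/-- The length-`n` prefix `ω^n` of a sequence `ω ∈ Ω = X^∞`. -/
def pre (ω : ℕ → X) (n : ℕ) : List X := List.ofFn fun i : Fin n => ω i

/-- `Γ(s)`: the set of infinite extensions of the situation `s`. -/
def Gamma (s : List X) : Set (ℕ → X) := {ω | pre ω s.length = s}

/-- A *supermartingale* with respect to the outer probability contents
`E 0, E 1, …` (`E n` governs the trial played in situations of length `n`,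
i.e. `E n` is the paper's `E_{n+1}`). -/
def IsSupermartingale (E : ℕ → (X → EReal) → EReal) (S : List X → EReal) : Prop :=
  ∀ s : List X, E s.length (fun x => S (s ++ [x])) ≤ S s

/-- A *martingale*: equality holds at every situation. -/
def IsMartingale (E : ℕ → (X → EReal) → EReal) (S : List X → EReal) : Prop :=
  ∀ s : List X, E s.length (fun x => S (s ++ [x])) = S s

/-- A function to `EReal` bounded below by a real constant. -/
def BddBelowFn {Y : Type*} (S : Y → EReal) : Prop := ∃ c : ℝ, ∀ t, (c : EReal) ≤ S t

/-- The conditional upper expectation `Ē(ξ | s)`. -/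
def upExp (E : ℕ → (X → EReal) → EReal) (ξ : (ℕ → X) → EReal) (s : List X) : EReal :=
  sInf {a | ∃ S : List X → EReal, IsSupermartingale E S ∧ BddBelowFn S ∧
    (∀ ω ∈ Gamma s, ξ ω ≤ liminf (fun n => S (pre ω n)) atTop) ∧ S s = a}

/-- The conditional lower expectation `E̲(ξ | s) = −Ē(−ξ | s)`. -/
def lowExp (E : ℕ → (X → EReal) → EReal) (ξ : (ℕ → X) → EReal) (s : List X) : EReal :=
  - upExp E (fun ω => - ξ ω) s

/-- The indicator function of an event, with values in `EReal`. -/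
def ind (A : Set (ℕ → X)) : (ℕ → X) → EReal := A.indicator fun _ => 1

/-- The conditional upper probability `P̄(A | s)`. -/
def upProb (E : ℕ → (X → EReal) → EReal) (A : Set (ℕ → X)) (s : List X) : EReal :=
  upExp E (ind A) s

/-- The conditional lower probability `P̲(A | s)`. -/
def lowProb (E : ℕ → (X → EReal) → EReal) (A : Set (ℕ → X)) (s : List X) : EReal :=
  lowExp E (ind A) s


/-- Update of the state (reference level, savings). -/
def stp (δ : ℝ) (p : ℝ × ℝ) (y : ℝ) : ℝ × ℝ :=
  if δ ≤ |y - p.1| then (y, p.2 + (y - p.1) ^ 2 / (y * p.1 ^ 2)) else p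

/-- The state along a reversed situation. -/
def sta (V : List X → EReal) (δ : ℝ) : List X → ℝ × ℝ
  | [] => ((V []).toReal, 0)
  | x :: l => stp δ (sta V δ l) (V (x :: l).reverse).toReal

/-- The capital in a given state. -/
def capt (δ : ℝ) (p : ℝ × ℝ) (y : ℝ) : ℝ :=
  y + δ * (p.2 + 1 - 2 / p.1 + y / p.1 ^ 2)

theorem capt_stp (δ : ℝ) (p : ℝ × ℝ) (y : ℝ) (hp : 1 ≤ p.1) (hy : 1 ≤ y) :
    capt δ (stp δ p y) y = capt δ p y := by
  unfold stp
  split_ifs with h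
  · unfold capt
    have h1 : p.1 ≠ 0 := by linarith
    have h2 : y ≠ 0 := by linarith
    simp only
    field_simp
    ring
  · rfl

theorem stp_fst (δ : ℝ) (p : ℝ × ℝ) (y : ℝ) (hp : 1 ≤ p.1) (hy : 1 ≤ y) :
    1 ≤ (stp δ p y).1 := by
  unfold stp
  split_ifs with h <;> simpa

theorem stp_snd (δ : ℝ) (p : ℝ × ℝ) (y : ℝ) (hy : 1 ≤ y) :
    p.2 ≤ (stp δ p y).2 := by
  unfold stp
  split_ifs with h
  · simp only
    have : 0 ≤ (y - p.1) ^ 2 / (y * p.1 ^ 2) := by positivity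
    linarith
  · exact le_rfl

theorem stp_abs (δ : ℝ) (hδ : 0 < δ) (p : ℝ × ℝ) (y : ℝ) :
    |y - (stp δ p y).1| ≤ δ := by
  unfold stp
  split_ifs with h
  · simp [hδ.le]
  · exact (not_le.1 h).le

theorem le_capt (δ : ℝ) (hδ : 0 < δ) (p : ℝ × ℝ) (y : ℝ) (hp : 1 ≤ p.1) (hy : 1 ≤ y) :
    y + δ * p.2 ≤ capt δ p y := by
  unfold capt
  have h : 0 ≤ 1 - 2 / p.1 + y / p.1 ^ 2 := by
    have h1 : 0 < p.1 := by linarith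
    have : 1 - 2 / p.1 + y / p.1 ^ 2 = ((p.1 - 1) ^ 2 + (y - 1)) / p.1 ^ 2 := by
      field_simp
      ring
    rw [this]
    apply div_nonneg _ (by positivity)
    nlinarith [sq_nonneg (p.1 - 1)]
  nlinarith

theorem incr_bound (δ M r y : ℝ) (hδ : 0 < δ) (hr : 1 ≤ r) (hy : 1 ≤ y) (hM : r ≤ M)
    (h : δ ≤ |y - r|) : δ ^ 2 / ((M + δ) * M ^ 2) ≤ (y - r) ^ 2 / (y * r ^ 2) := by
  have hr0 : 0 < r := by linarith
  have hy0 : 0 < y := by linarith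
  have hM0 : 0 ≤ M + δ := by linarith
  have h1 : δ ^ 2 / (r + δ) ≤ (y - r) ^ 2 / y := by
    rw [div_le_div_iff₀ (by positivity) hy0]
    rcases le_abs.1 h with h | h
    · obtain ⟨t, ht, rfl⟩ : ∃ t, 0 ≤ t ∧ y = r + δ + t := ⟨y - r - δ, by linarith, by ring⟩
      have : 0 ≤ δ * r * t := by positivity
      have : 0 ≤ δ * δ * t := by positivity
      have : 0 ≤ r * t * t := by positivity
      have : 0 ≤ δ * t * t := by positivity
      nlinarith
    · have : δ ^ 2 ≤ (y - r) ^ 2 := by nlinarith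
      apply mul_le_mul this (by linarith) hy0.le (by positivity)
  calc δ ^ 2 / ((M + δ) * M ^ 2) ≤ δ ^ 2 / ((r + δ) * r ^ 2) := by gcongr
    _ = δ ^ 2 / (r + δ) / r ^ 2 := by rw [div_div]
    _ ≤ (y - r) ^ 2 / y / r ^ 2 := by gcongr
    _ = _ := by rw [div_div]

theorem path_core (δ a : ℝ) (hδ : 0 < δ) (v : ℕ → ℝ) (hv : ∀ n, 1 ≤ v n) (p : ℕ → ℝ × ℝ)
    (p0 : p 0 = (v 0, 0)) (ps : ∀ n, p (n + 1) = stp δ (p n) (v (n + 1)))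
    (hf : ∀ N, ∃ n ≥ N, a < v n) :
    ∃ N, ∀ n ≥ N, a - 2 * δ ≤ capt δ (p n) (v n) := by
  have hp : ∀ n, 1 ≤ (p n).1 := by
    intro n
    induction n with
    | zero => rw [p0]; exact hv 0
    | succ n ih => rw [ps]; exact stp_fst _ _ _ ih (hv _)
  have hK1 : ∀ n, (p n).2 ≤ (p (n + 1)).2 := by
    intro n
    rw [ps]
    exact stp_snd _ _ _ (hv _)
  have hmono : Monotone fun n => (p n).2 := monotone_nat_of_le_succ hK1
  have hK0 : ∀ n, 0 ≤ (p n).2 := by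
    intro n
    have := hmono (Nat.zero_le n)
    simpa [p0] using this
  have habs : ∀ n, |v n - (p n).1| ≤ δ := by
    intro n
    cases n with
    | zero => simp [p0, hδ.le]
    | succ n => rw [ps]; exact stp_abs _ hδ _ _
  have hcap : ∀ n, v n + δ * (p n).2 ≤ capt δ (p n) (v n) := fun n =>
    le_capt _ hδ _ _ (hp n) (hv n)
  by_cases hA : ∃ N, ∀ n ≥ N, ¬ δ ≤ |v (n + 1) - (p n).1|
  · obtain ⟨N, hN⟩ := hA
    have hc : ∀ n ≥ N, (p n).1 = (p N).1 := by
      intro n hn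
      induction n, hn using Nat.le_induction with
      | base => rfl
      | succ n hn ih =>
        rw [ps, stp, if_neg (hN n hn), ih]
    obtain ⟨m, hm, ham⟩ := hf N
    refine ⟨N, fun n hn => ?_⟩
    have h1 := abs_le.1 (habs m)
    have h2 := abs_le.1 (habs n)
    rw [hc m hm] at h1
    rw [hc n hn] at h2
    have h3 := hcap n
    have h4 : 0 ≤ δ * (p n).2 := mul_nonneg hδ.le (hK0 n)
    linarith
  · push Not at hA
    by_cases hB : ∃ M, ∀ N, ∃ n ≥ N, δ ≤ |v (n + 1) - (p n).1| ∧ (p n).1 ≤ M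
    · obtain ⟨M, hM⟩ := hB
      have hM0 : 0 < M := by
        obtain ⟨n, _, _, h⟩ := hM 0
        linarith [hp n]
      set b := δ ^ 2 / ((M + δ) * M ^ 2) with hb
      have hb0 : 0 < b := by positivity
      have hk : ∀ k : ℕ, ∃ N, k * b ≤ (p N).2 := by
        intro k
        induction k with
        | zero => exact ⟨0, by simp [p0]⟩
        | succ k ih =>
          obtain ⟨N, hN⟩ := ih
          obtain ⟨n, hn, h1, h2⟩ := hM N
          refine ⟨n + 1, ?_⟩
          have h3 := incr_bound δ M (p n).1 (v (n + 1)) hδ (hp n) (hv _) h2 h1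
          have h4 : (p N).2 ≤ (p n).2 := hmono hn
          rw [ps, stp, if_pos h1]
          push_cast
          linarith
      obtain ⟨k, hk'⟩ := exists_nat_ge (a / δ / b)
      obtain ⟨N, hN⟩ := hk k
      refine ⟨N, fun n hn => ?_⟩
      have h1 : (p N).2 ≤ (p n).2 := hmono hn
      rw [div_le_iff₀ hb0] at hk'
      have h2 : a / δ ≤ (p n).2 := by linarith
      rw [div_le_iff₀ hδ] at h2
      have := hcap n
      have := hv n
      linarith
    · push Not at hB
      obtain ⟨N, hN⟩ := hB a
      refine ⟨N, fun n hn => ?_⟩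
      have h1 : a < (p n).1 := by
        by_contra hcon
        have hst : ∀ m ≥ n, (p m).1 = (p n).1 := by
          intro m hm
          induction m, hm using Nat.le_induction with
          | base => rfl
          | succ m hm ih =>
            by_cases hmv : δ ≤ |v (m + 1) - (p m).1|
            · exact absurd (hN m (hn.trans hm) hmv) (by rwa [ih])
            · rw [ps, stp, if_neg hmv, ih]
        obtain ⟨m, hm, hmv⟩ := hA n
        have := hN m (hn.trans hm) hmv
        rw [hst m hm] at this
        exact hcon this
      have h2 := abs_le.1 (habs n)
      have h3 := hcap n
      have h4 : 0 ≤ δ * (p n).2 := mul_nonneg hδ.le (hK0 n)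
      linarith

open Classical in
/-- The new capital process. -/
def newF (V : List X → EReal) (δ : ℝ) (u : List X) : EReal :=
  if ∃ q, q <+: u ∧ V q = ⊤ then ⊤ else
    ((capt δ (sta V δ u.reverse) (V u).toReal : ℝ) : EReal)

theorem one_le_toReal {y : EReal} (h : 1 ≤ y) (h' : y ≠ ⊤) : 1 ≤ y.toReal := by
  have := EReal.toReal_le_toReal h (EReal.coe_ne_bot 1) h'
  simpa using this

theorem coe_toReal_of {y : EReal} (h : 1 ≤ y) (h' : y ≠ ⊤) : ((y.toReal : ℝ) : EReal) = y := by
  apply EReal.coe_toReal h'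
  rintro rfl
  exact EReal.coe_ne_bot 1 (le_bot_iff.1 h)

theorem sta_fst (V : List X → EReal) (hV : ∀ u, 1 ≤ V u) (δ : ℝ) :
    ∀ l : List X, (∀ q, q <+: l.reverse → V q ≠ ⊤) → 1 ≤ (sta V δ l).1
  | [], h => one_le_toReal (hV _) (h _ (by simp))
  | x :: l, h => by
    refine stp_fst _ _ _ (sta_fst V hV δ l fun q hq => h q ?_)
      (one_le_toReal (hV _) (h _ (List.prefix_refl _)))
    rw [List.reverse_cons]
    exact hq.trans (List.prefix_append _ _)

theorem sta_snd (V : List X → EReal) (hV : ∀ u, 1 ≤ V u) (δ : ℝ) :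
    ∀ l : List X, (∀ q, q <+: l.reverse → V q ≠ ⊤) → 0 ≤ (sta V δ l).2
  | [], h => le_rfl
  | x :: l, h => by
    refine (sta_snd V hV δ l fun q hq => h q ?_).trans
      (stp_snd _ _ _ (one_le_toReal (hV _) (h _ (List.prefix_refl _))))
    rw [List.reverse_cons]
    exact hq.trans (List.prefix_append _ _)

theorem newF_nonneg (V : List X → EReal) (hV : ∀ u, 1 ≤ V u) (δ : ℝ) (hδ : 0 < δ) (u : List X) :
    0 ≤ newF V δ u := by
  unfold newF
  split_ifs with h
  · simp
  · push Not at h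
    have h1 := sta_fst V hV δ u.reverse (by simpa using h)
    have h2 := sta_snd V hV δ u.reverse (by simpa using h)
    have h3 := one_le_toReal (hV u) (h _ (List.prefix_refl _))
    have h4 := le_capt δ hδ _ _ h1 h3
    have h5 := mul_nonneg hδ.le h2
    exact_mod_cast (by linarith : (0:ℝ) ≤ capt δ (sta V δ u.reverse) (V u).toReal)

theorem opc_affine {Y : Type*} {E : (Y → EReal) → EReal} (hE : IsOPC E) (c d : ℝ) (hc : 0 < c)
    (f : Y → EReal) : E (fun y => (c : EReal) * f y + (d : EReal)) ≤ (c : EReal) * E f + d := by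
  have := hE.2.2.1 (fun y => (c : EReal) * f y) (fun _ => (d : EReal))
  rwa [hE.2.1 c hc, hE.2.2.2] at this

theorem newF_super (V : List X → EReal) (hV : ∀ u, 1 ≤ V u) (δ : ℝ) (hδ : 0 < δ) (u : List X)
    (E : (X → EReal) → EReal) (hE : IsOPC E) (hS : E (fun x => V (u ++ [x])) ≤ V u) :
    E (fun x => newF V δ (u ++ [x])) ≤ newF V δ u := by
  by_cases h : ∃ q, q <+: u ∧ V q = ⊤
  · have : newF V δ u = ⊤ := by rw [newF, if_pos h]
    rw [this]
    exact le_top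
  have hu : newF V δ u = ((capt δ (sta V δ u.reverse) (V u).toReal : ℝ) : EReal) := by
    rw [newF, if_neg h]
  push Not at h
  set p := sta V δ u.reverse with hp
  have hp1 : 1 ≤ p.1 := sta_fst V hV δ u.reverse (by simpa using h)
  have hcap : ∀ y : ℝ, capt δ p y = (1 + δ / p.1 ^ 2) * y + δ * (p.2 + 1 - 2 / p.1) := by
    intro y
    unfold capt
    ring
  have hc : 0 < 1 + δ / p.1 ^ 2 := by positivity
  generalize 1 + δ / p.1 ^ 2 = c at hcap hc
  generalize δ * (p.2 + 1 - 2 / p.1) = d at hcap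
  have hx : ∀ x, newF V δ (u ++ [x]) ≤ (c : EReal) * V (u ++ [x]) + (d : EReal) := by
    intro x
    by_cases hxt : V (u ++ [x]) = ⊤
    · rw [hxt, EReal.coe_mul_top_of_pos hc, EReal.top_add_coe]
      exact le_top
    · have hn : ¬ ∃ q, q <+: u ++ [x] ∧ V q = ⊤ := by
        rintro ⟨q, hq, hq'⟩
        rcases List.prefix_concat_iff.1 hq with rfl | hq
        · exact hxt hq'
        · exact h q hq hq'
      rw [newF, if_neg hn]
      have h1 : 1 ≤ (V (u ++ [x])).toReal := one_le_toReal (hV _) hxt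
      have h2 : sta V δ (u ++ [x]).reverse = stp δ p (V (u ++ [x])).toReal := by
        rw [List.reverse_append]
        simp [sta, hp]
      rw [h2, capt_stp _ _ _ hp1 h1, hcap]
      rw [EReal.coe_add, EReal.coe_mul, coe_toReal_of (hV _) hxt]
  have hut := h u (List.prefix_refl _)
  rw [hu, hcap]
  rw [EReal.coe_add, EReal.coe_mul, coe_toReal_of (hV _) hut]
  refine (hE.1 _ _ hx).trans ((opc_affine hE c d hc _).trans ?_)
  gcongr

theorem pre_succ (ω : ℕ → X) (n : ℕ) : pre ω (n + 1) = pre ω n ++ [ω n] := by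
  unfold pre
  rw [List.ofFn_succ', List.concat_eq_append]
  simp

theorem pre_add (ω : ℕ → X) (m n : ℕ) :
    pre ω (m + n) = pre ω m ++ pre (fun i => ω (m + i)) n := by
  induction n with
  | zero => simp [pre]
  | succ n ih => rw [← add_assoc, pre_succ, ih, pre_succ, List.append_assoc]

theorem pre_prefix (ω : ℕ → X) {m n : ℕ} (h : m ≤ n) : pre ω m <+: pre ω n := by
  obtain ⟨k, rfl⟩ := Nat.exists_eq_add_of_le h
  rw [pre_add]
  exact List.prefix_append _ _

theorem newF_path (V : List X → EReal) (hV : ∀ u, 1 ≤ V u) (δ : ℝ) (hδ : 0 < δ) (ω : ℕ → X)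
    (a : ℝ) (hf : ∀ N, ∃ n ≥ N, (a : EReal) < V (pre ω n)) :
    ∃ N, ∀ n ≥ N, ((a - 2 * δ : ℝ) : EReal) ≤ newF V δ (pre ω n) := by
  by_cases h : ∃ n, V (pre ω n) = ⊤
  · obtain ⟨N, hN⟩ := h
    refine ⟨N, fun n hn => ?_⟩
    rw [newF, if_pos ⟨_, pre_prefix ω hn, hN⟩]
    exact le_top
  · push Not at h
    obtain ⟨N, hN⟩ := path_core δ a hδ (fun n => (V (pre ω n)).toReal)
      (fun n => one_le_toReal (hV _) (h n)) (fun n => sta V δ (pre ω n).reverse)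
      (by simp [pre, sta]) (fun n => by
        simp only [pre_succ]
        rw [List.reverse_append]
        simp [sta]) (fun N => by
        obtain ⟨n, hn, hn'⟩ := hf N
        refine ⟨n, hn, ?_⟩
        rw [← coe_toReal_of (hV _) (h n)] at hn'
        exact_mod_cast hn')
    refine ⟨N, fun n hn => ?_⟩
    unfold newF
    split_ifs with hq
    · exact le_top
    · exact_mod_cast hN n hn

open Classical in
theorem main_le (E : ℕ → (X → EReal) → EReal) (hE : ∀ n, IsOPC (E n))
    (ξ : (ℕ → X) → EReal) (s : List X) (S : List X → EReal) (hS : IsSupermartingale E S)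
    (hb : BddBelowFn S)
    (hlim : ∀ ω ∈ Gamma s, ξ ω ≤ limsup (fun n => S (pre ω n)) atTop) (z : ℝ)
    (hz : S s < z) : upExp E ξ s ≤ z := by
  obtain ⟨c0, hc0⟩ := hb
  set d : ℝ := 1 - c0 with hd
  have hSs : S s ≠ ⊤ := ne_top_of_lt hz
  have hSb : S s ≠ ⊥ := ne_of_gt (lt_of_lt_of_le (EReal.bot_lt_coe c0) (hc0 s))
  obtain ⟨w, hw⟩ : ∃ w : ℝ, S s = w := ⟨_, (EReal.coe_toReal hSs hSb).symm⟩
  rw [hw] at hz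
  have hz' : w < z := by exact_mod_cast hz
  set δ : ℝ := (z - w) / 3 with hδd
  have hδ : 0 < δ := by
    rw [hδd]
    linarith
  set V : List X → EReal := fun u => S (s ++ u) + (d : EReal) with hVd
  have hV : ∀ u, 1 ≤ V u := by
    intro u
    calc (1 : EReal) = (c0 : EReal) + (d : EReal) := by
          rw [← EReal.coe_add, hd]
          simp
      _ ≤ _ := by
          simp only [hVd]
          gcongr
          exact hc0 _
  set e : ℝ := 2 * δ - d with hed
  set S' : List X → EReal := fun t =>
    if s <+: t then newF V δ (t.drop s.length) + (e : EReal) else ⊤ with hS'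
  have hS'app : ∀ u, S' (s ++ u) = newF V δ u + (e : EReal) := by
    intro u
    simp [hS']
  have hVs : V [] = ((w + d : ℝ) : EReal) := by simp [hVd, hw]
  have hS's : S' s ≤ z := by
    have h0 := hS'app []
    rw [List.append_nil] at h0
    have hn : ¬ ∃ q, q <+: ([] : List X) ∧ V q = ⊤ := by
      rintro ⟨q, hq, hq'⟩
      rw [List.prefix_nil.1 hq, hVs] at hq'
      exact EReal.coe_ne_top _ hq'
    rw [h0, newF, if_neg hn, ← EReal.coe_add]
    rw [EReal.coe_le_coe_iff]
    have h1 : 1 ≤ w + d := by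
      have := hV []
      rw [hVs] at this
      exact_mod_cast this
    simp only [List.reverse_nil, sta, hVs, EReal.toReal_coe, capt]
    have h2 : (0:ℝ) + 1 - 2 / (w + d) + (w + d) / (w + d) ^ 2 ≤ 1 := by
      have h3 : 0 < w + d := by linarith
      have : (0:ℝ) + 1 - 2 / (w + d) + (w + d) / (w + d) ^ 2 = 1 - 1 / (w + d) := by
        field_simp
        ring
      rw [this]
      have : 0 < 1 / (w + d) := by positivity
      linarith
    have h4 := mul_le_mul_of_nonneg_left h2 hδ.le
    linarith
  refine le_trans (sInf_le ⟨S', ?_, ?_, ?_, rfl⟩) hS's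
  · intro t
    by_cases ht : s <+: t
    · obtain ⟨u, rfl⟩ := ht
      rw [hS'app]
      have : (fun x => S' (s ++ u ++ [x])) =
          fun x => ((1:ℝ) : EReal) * newF V δ (u ++ [x]) + (e : EReal) := by
        funext x
        rw [List.append_assoc, hS'app]
        simp
      rw [this]
      refine (opc_affine (hE _) 1 e one_pos _).trans ?_
      rw [EReal.coe_one, one_mul]
      gcongr
      apply newF_super V hV δ hδ u _ (hE _)
      have h1 := opc_affine (hE (s ++ u).length) 1 d one_pos (fun x => S (s ++ u ++ [x]))
      simp only [EReal.coe_one, one_mul, List.append_assoc] at h1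
      refine h1.trans ?_
      simp only [hVd]
      gcongr
      have := hS (s ++ u)
      simpa only [List.append_assoc] using this
    · have : S' t = ⊤ := by simp [hS', ht]
      rw [this]
      exact le_top
  · refine ⟨e, fun t => ?_⟩
    simp only [hS']
    split_ifs with ht
    · calc (e : EReal) = 0 + (e : EReal) := by simp
        _ ≤ _ := by
          gcongr
          exact newF_nonneg V hV δ hδ _
    · exact le_top
  · intro ω hω
    refine (hlim ω hω).trans ?_
    have hω' : ∀ n, pre ω (s.length + n) = s ++ pre (fun i => ω (s.length + i)) n := by
      intro n
      rw [pre_add]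
      congr 1
    apply EReal.ge_of_forall_gt_iff_ge.1
    intro a ha
    have hfr := frequently_lt_of_lt_limsup (by isBoundedDefault) ha
    rw [frequently_atTop] at hfr
    obtain ⟨N, hN⟩ := newF_path V hV δ hδ (fun i => ω (s.length + i)) (a + d) (fun N => by
      obtain ⟨n, hn, hn'⟩ := hfr (s.length + N)
      obtain ⟨k, rfl⟩ := Nat.exists_eq_add_of_le ((Nat.le_add_right _ _).trans hn)
      refine ⟨k, by omega, ?_⟩
      rw [hω'] at hn'
      simp only [hVd]
      rw [EReal.coe_add]
      exact EReal.add_lt_add_right_coe hn' d)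
    apply le_liminf_of_le (by isBoundedDefault)
    rw [eventually_atTop]
    refine ⟨s.length + N, fun n hn => ?_⟩
    obtain ⟨k, rfl⟩ := Nat.exists_eq_add_of_le ((Nat.le_add_right _ _).trans hn)
    rw [hω', hS'app]
    calc (a : EReal) = ((a + d - 2 * δ : ℝ) : EReal) + (e : EReal) := by
          rw [← EReal.coe_add, hed]
          congr 1
          ring
      _ ≤ _ := by
          gcongr
          exact hN k (by omega)

/-- Replacing `liminf` by `limsup` in the definition of the conditional upper
expectation does not change its value. -/
theorem upExp_eq_inf_limsup [Nonempty X]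
    (E : ℕ → (X → EReal) → EReal) (hE : ∀ n, IsOPC (E n))
    (ξ : (ℕ → X) → EReal) (s : List X) :
    upExp E ξ s =
      sInf {a | ∃ S : List X → EReal, IsSupermartingale E S ∧ BddBelowFn S ∧
        (∀ ω ∈ Gamma s, ξ ω ≤ limsup (fun n => S (pre ω n)) atTop) ∧ S s = a} := by
  apply le_antisymm
  · apply le_sInf
    rintro a ⟨S, hS, hb, hlim, rfl⟩
    apply EReal.le_of_forall_lt_iff_le.1
    intro z hz
    exact main_le E hE ξ s S hS hb hlim z hz
  · apply sInf_le_sInf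
    rintro a ⟨S, hS, hb, hlim, rfl⟩
    exact ⟨S, hS, hb, fun ω hω => (hlim ω hω).trans liminf_le_limsup, rfl⟩


end

end GTP
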